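/- arXiv:2512.00270 — 2 statements merged into one kernel-verified Lean document; each statement's English description precedes it below -/
import Mathlib

section
/- Let F : S → G(S) be a Markov chain on a measurable space S and let p : S → {1,…,d} be a measurable priority function. If there exists a lexicographic progress-measure supermartingale for (F, p), then ℙ_{x₀}[Parity(p)] = 1 for every initial state x₀ ∈ S. -/
open MeasureTheory ProbabilityTheory Set
open scoped ENNReal NNReal

variable {S : Type*} [MeasurableSpace S]

/-- Prepend an initial state to a trace. -/
def prep (s₀ : S) (ω : ℕ → S) : ℕ → S := fun n => Nat.rec s₀ (fun k _ => ω k) n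

/-- The parity condition for a priority function `p`: the minimum priority
occurring infinitely often is even. -/
def parityEvent (p : S → ℕ) : Set (ℕ → S) :=
  {ω | Even (sInf {q : ℕ | {i : ℕ | p (ω i) = q}.Infinite})}

/-- The strict lexicographic supermartingale ordering on `[0,∞]^n`. -/
def lexGT {n : ℕ} (a b : Fin n → ℝ≥0∞) : Prop :=
  ∃ l : Fin n, (∀ i < l, b i ≤ a i) ∧ b l + 1 ≤ a l

/-- The non-strict lexicographic supermartingale ordering on `[0,∞]^n`. -/
def lexGE {n : ℕ} (a b : Fin n → ℝ≥0∞) : Prop :=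
  lexGT a b ∨ ∀ i, b i ≤ a i

/-- The truncated nested strict lexicographic ordering `≻⁽²⁾_k`, comparing only
the first `k` blocks. -/
def nlexGTTrunc {d : ℕ} {m : Fin d → ℕ} (k : ℕ) (a b : ∀ i, Fin (m i) → ℝ≥0∞) : Prop :=
  ∃ l : Fin d, (l : ℕ) < k ∧ (∀ i < l, lexGE (a i) (b i)) ∧ lexGT (a l) (b l)

/-- The truncated nested non-strict lexicographic ordering `⪰⁽²⁾_k`, comparing only
the first `k` blocks. -/
def nlexGETrunc {d : ℕ} {m : Fin d → ℕ} (k : ℕ) (a b : ∀ i, Fin (m i) → ℝ≥0∞) : Prop :=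
  nlexGTTrunc k a b ∨ ∀ i : Fin d, (i : ℕ) < k → lexGE (a i) (b i)

/-- The next-time operator applied componentwise to a nested-vector-valued
function: `(𝕏 r)(s) = ∫ r dF(s)`. -/
noncomputable def nextTimeN (F : Kernel S S) {d : ℕ} {m : Fin d → ℕ}
    (r : S → ∀ i, Fin (m i) → ℝ≥0∞) : S → ∀ i, Fin (m i) → ℝ≥0∞ :=
  fun s i k => ∫⁻ y, r y i k ∂(F s)

/-- A lexicographic progress-measure supermartingale (LexPMSM) for `(F, p)` with
block sizes `m₁,…,m_d`: a measurable function `r : S → ∏ᵢ [0,∞)^{mᵢ}` with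
`r(x) ⪰⁽²⁾_{p(x)} (𝕏 r)(x)` when `p(x)` is even and `r(x) ≻⁽²⁾_{p(x)} (𝕏 r)(x)`
when `p(x)` is odd. -/
def IsLexPMSM (F : Kernel S S) (p : S → ℕ) {d : ℕ} {m : Fin d → ℕ}
    (r : S → ∀ i, Fin (m i) → ℝ≥0∞) : Prop :=
  (∀ i k, Measurable fun x => r x i k) ∧ (∀ x i k, r x i k ≠ ⊤) ∧
    (∀ x, Even (p x) → nlexGETrunc (p x) (r x) (nextTimeN F r x)) ∧
    (∀ x, ¬ Even (p x) → nlexGTTrunc (p x) (r x) (nextTimeN F r x))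

/-!
Fix a priority `q` and consider the traces that eventually only see priorities `≥ q`. From then on,
every component in the first `q` blocks is, outside the states where a lexicographically earlier
component drops by one in expectation, a nonnegative supermartingale. Such a supermartingale drops
by one only finitely often: its initial value bounds the expected number of drops made before the
exceptional states are first reached, and Borel-Cantelli applies to every shift of the trace. By
induction along the lexicographic order, all components in the first `q` blocks drop only finitely
often. A state of odd priority `q` forces one of these drops, so an odd `q` cannot be the least
priority seen infinitely often.
-/

open Filter

theorem measurable_prep : Measurable fun z : S × (ℕ → S) => prep z.1 z.2 := by
  refine measurable_pi_iff.2 fun n => ?_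
  cases n with
  | zero => exact measurable_fst
  | succ n => exact (measurable_pi_apply n).comp measurable_snd

theorem measurable_prep_right (x : S) : Measurable (prep x) :=
  measurable_prep.comp measurable_prodMk_left

theorem measurable_measure_prep_preimage (P : Kernel S (ℕ → S)) [IsSFiniteKernel P]
    {E : Set (ℕ → S)} (hE : MeasurableSet E) : Measurable fun x => P x (prep x ⁻¹' E) :=
  Kernel.measurable_kernel_prodMk_left (measurable_prep hE)

/-- `avoidingVisit B D n` is the event that a trace visits `D` at time `n` without having been
in `B` up to and including time `n`. -/
def avoidingVisit {α : Type*} (B D : Set α) (n : ℕ) : Set (ℕ → α) :=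
  {ω | (∀ i ≤ n, ω i ∉ B) ∧ ω n ∈ D}

theorem measurableSet_avoidingVisit {B D : Set S} (hB : MeasurableSet B) (hD : MeasurableSet D)
    (n : ℕ) : MeasurableSet (avoidingVisit B D n) := by
  have h_avoid : MeasurableSet {ω : ℕ → S | ∀ i ≤ n, ω i ∉ B} := by
    simp only [ofPred_forall]
    exact .iInter fun i => .iInter fun _ => (measurable_pi_apply i hB).compl
  exact h_avoid.inter (measurable_pi_apply n hD)

theorem measurableSet_eventually_notMem_avoidingVisit {B D : Set S} (hB : MeasurableSet B)
    (hD : MeasurableSet D) : MeasurableSet {ω | ∀ᶠ n in atTop, ω ∉ avoidingVisit B D n} := by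
  simp only [← mem_compl_iff, ← mem_liminf_iff_eventually_mem]
  exact .measurableSet_liminf fun n => (measurableSet_avoidingVisit hB hD n).compl

section AvoidingVisit

variable {α : Type*} {B D : Set α} {x : α}

theorem prep_preimage_avoidingVisit_of_mem (hx : x ∈ B) (D : Set α) (n : ℕ) :
    prep x ⁻¹' avoidingVisit B D n = ∅ :=
  eq_empty_of_forall_notMem fun _ h => h.1 0 n.zero_le hx

theorem prep_preimage_avoidingVisit_zero_of_notMem (B : Set α) (hx : x ∉ D) :
    prep x ⁻¹' avoidingVisit B D 0 = ∅ :=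
  eq_empty_of_forall_notMem fun _ h => hx h.2

theorem prep_preimage_avoidingVisit_succ (hx : x ∉ B) (D : Set α) (n : ℕ) :
    prep x ⁻¹' avoidingVisit B D (n + 1) = avoidingVisit B D n := by
  ext ω
  refine ⟨fun h => ⟨fun i hi => h.1 (i + 1) (by omega), h.2⟩, fun h => ⟨fun i hi => ?_, h.2⟩⟩
  cases i with
  | zero => exact hx
  | succ i => exact h.1 i (by omega)

theorem eventually_notMem_of_shift_notMem_avoidingVisit {ω : ℕ → α}
    (hω : ∀ N, ∀ᶠ n in atTop, (fun i => ω (i + N)) ∉ avoidingVisit B D n)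
    (hB : ∀ᶠ n in atTop, ω n ∉ B) : ∀ᶠ n in atTop, ω n ∉ D := by
  obtain ⟨N, hN⟩ := eventually_atTop.1 hB
  have h_shift : ∀ᶠ n in atTop, ω (n + N) ∉ D :=
    (hω N).mono fun n hn hD => hn ⟨fun i _ => hN (i + N) (by omega), hD⟩
  rwa [← map_add_atTop_eq_nat N]

end AvoidingVisit

/-- `P` assigns to each state `s₀` the law of the trace `s₁ s₂ ⋯` that the Markov chain `F`
produces after `s₀`; the initial state itself is not part of the trace. -/
def IsTraceKernel (F : Kernel S S) (P : Kernel S (ℕ → S)) : Prop :=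
  ∀ s₀ : S, (P s₀ : Measure (ℕ → S)) = (F s₀).bind fun s₁ => (P s₁).map (prep s₁)

namespace IsTraceKernel

variable {F : Kernel S S} {P : Kernel S (ℕ → S)}

theorem measure_apply [IsSFiniteKernel P] (hP : IsTraceKernel F P) (x : S) {E : Set (ℕ → S)}
    (hE : MeasurableSet E) : P x E = ∫⁻ y, P y (prep y ⁻¹' E) ∂(F x) := by
  have h_map (y : S) {A : Set (ℕ → S)} (hA : MeasurableSet A) :
      (P y).map (prep y) A = P y (prep y ⁻¹' A) :=
    Measure.map_apply (measurable_prep_right y) hA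
  have h_meas : Measurable fun y => (P y).map (prep y) :=
    Measure.measurable_of_measurable_coe _ fun A hA => by
      simpa only [h_map _ hA] using measurable_measure_prep_preimage P hA
  rw [hP x, Measure.bind_apply hE h_meas.aemeasurable]
  exact lintegral_congr fun y => h_map y hE

theorem ae_of_forall_ae_prep [IsSFiniteKernel P] (hP : IsTraceKernel F P) {E : Set (ℕ → S)}
    (hE : MeasurableSet E) (h : ∀ y, ∀ᵐ ω ∂(P y), prep y ω ∈ E) (x : S) :
    ∀ᵐ ω ∂(P x), ω ∈ E := by
  have h_null (y : S) : P y (prep y ⁻¹' Eᶜ) = 0 := h y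
  change P x Eᶜ = 0
  simp only [hP.measure_apply x hE.compl, h_null, lintegral_zero]

theorem ae_shift_mem [IsSFiniteKernel P] (hP : IsTraceKernel F P) {E : Set (ℕ → S)}
    (hE : MeasurableSet E) (h : ∀ x, ∀ᵐ ω ∂(P x), ω ∈ E) (N : ℕ) (x : S) :
    ∀ᵐ ω ∂(P x), (fun i => ω (i + N)) ∈ E := by
  induction N generalizing x with
  | zero => exact h x
  | succ N ih =>
    have h_shift : Measurable fun (ω : ℕ → S) i => ω (i + (N + 1)) :=
      measurable_pi_iff.2 fun i => measurable_pi_apply (i + (N + 1))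
    exact hP.ae_of_forall_ae_prep (h_shift hE) ih x

variable [IsMarkovKernel P] {B D : Set S} {f : S → ℝ≥0∞}

theorem sum_measure_avoidingVisit_le (hP : IsTraceKernel F P) (hB : MeasurableSet B)
    (hD : MeasurableSet D) (hf : ∀ x ∉ B, ∫⁻ y, f y ∂(F x) + D.indicator 1 x ≤ f x) (n : ℕ)
    (x : S) : ∑ i ∈ Finset.range n, P x (prep x ⁻¹' avoidingVisit B D i) ≤ f x := by
  induction n generalizing x with
  | zero => simp
  | succ n ih =>
    by_cases hx : x ∈ B
    · simp [prep_preimage_avoidingVisit_of_mem hx]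
    have h_later : ∑ i ∈ Finset.range n, P x (avoidingVisit B D i) ≤ ∫⁻ y, f y ∂(F x) := by
      simp_rw [fun i => hP.measure_apply x (measurableSet_avoidingVisit hB hD i)]
      rw [← lintegral_finsetSum _ fun i _ =>
        measurable_measure_prep_preimage P (measurableSet_avoidingVisit hB hD i)]
      exact lintegral_mono ih
    have h_now : P x (prep x ⁻¹' avoidingVisit B D 0) ≤ D.indicator 1 x := by
      by_cases hxD : x ∈ D
      · simpa [hxD] using prob_le_one
      · simp [prep_preimage_avoidingVisit_zero_of_notMem B hxD]
    rw [Finset.sum_range_succ']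
    simp_rw [prep_preimage_avoidingVisit_succ hx]
    exact (add_le_add h_later h_now).trans (hf x hx)

theorem ae_eventually_notMem_avoidingVisit (hP : IsTraceKernel F P) (hB : MeasurableSet B)
    (hD : MeasurableSet D) (hf_top : ∀ x, f x ≠ ⊤)
    (hf : ∀ x ∉ B, ∫⁻ y, f y ∂(F x) + D.indicator 1 x ≤ f x) (x : S) :
    ∀ᵐ ω ∂(P x), ∀ᶠ n in atTop, ω ∉ avoidingVisit B D n := by
  refine hP.ae_of_forall_ae_prep (E := {ω | ∀ᶠ n in atTop, ω ∉ avoidingVisit B D n})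
    (measurableSet_eventually_notMem_avoidingVisit hB hD) (fun y => ?_) x
  have h_sum : ∑' n, P y (prep y ⁻¹' avoidingVisit B D n) ≤ f y :=
    ENNReal.tsum_le_of_sum_range_le fun n => hP.sum_measure_avoidingVisit_le hB hD hf n y
  exact ae_eventually_notMem (ne_top_of_le_ne_top (hf_top y) h_sum)

theorem ae_eventually_notMem_of_drift (hP : IsTraceKernel F P) (hB : MeasurableSet B)
    (hD : MeasurableSet D) (hf_top : ∀ x, f x ≠ ⊤)
    (hf : ∀ x ∉ B, ∫⁻ y, f y ∂(F x) + D.indicator 1 x ≤ f x) (x : S) :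
    ∀ᵐ ω ∂(P x), (∀ᶠ n in atTop, ω n ∉ B) → ∀ᶠ n in atTop, ω n ∉ D := by
  have h_shift := ae_all_iff.2 fun N => hP.ae_shift_mem
    (measurableSet_eventually_notMem_avoidingVisit hB hD)
    (hP.ae_eventually_notMem_avoidingVisit hB hD hf_top hf) N x
  exact h_shift.mono fun ω hω => eventually_notMem_of_shift_notMem_avoidingVisit hω

end IsTraceKernel

/-- The states from which the expectation of `f` drops by at least one in the next step. -/
def decreaseSet (F : Kernel S S) (f : S → ℝ≥0∞) : Set S :=
  {x | ∫⁻ y, f y ∂(F x) + 1 ≤ f x}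

theorem measurableSet_decreaseSet (F : Kernel S S) {f : S → ℝ≥0∞} (hf : Measurable f) :
    MeasurableSet (decreaseSet F f) :=
  measurableSet_le (hf.lintegral_kernel.add_const 1) hf

theorem lintegral_add_indicator_decreaseSet_le {F : Kernel S S} {f : S → ℝ≥0∞} {x : S}
    (h : ∫⁻ y, f y ∂(F x) ≤ f x) :
    ∫⁻ y, f y ∂(F x) + (decreaseSet F f).indicator 1 x ≤ f x := by
  by_cases hx : x ∈ decreaseSet F f
  · simpa only [indicator_of_mem hx, Pi.one_apply] using! hx
  · simpa only [indicator_of_notMem hx, add_zero] using h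

namespace IsTraceKernel

variable {F : Kernel S S} {P : Kernel S (ℕ → S)} [IsMarkovKernel P]

theorem ae_eventually_notMem_decreaseSet_of_lex (hP : IsTraceKernel F P) {ι : Type*} [Finite ι]
    [Preorder ι] {B : Set S} (hB : MeasurableSet B) {f : ι → S → ℝ≥0∞}
    (hf_meas : ∀ i, Measurable (f i)) (hf_top : ∀ i x, f i x ≠ ⊤)
    (hf : ∀ i, ∀ x ∉ B, (∀ j < i, x ∉ decreaseSet F (f j)) → ∫⁻ y, f i y ∂(F x) ≤ f i x)
    (i : ι) (x : S) :
    ∀ᵐ ω ∂(P x), (∀ᶠ n in atTop, ω n ∉ B) → ∀ᶠ n in atTop, ω n ∉ decreaseSet F (f i) := by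
  induction i using WellFoundedLT.induction with
  | ind i ih =>
    let B' : Set S := B ∪ ⋃ j, ⋃ _ : j < i, decreaseSet F (f j)
    have hB'_iff (y : S) : y ∉ B' ↔ y ∉ B ∧ ∀ j < i, y ∉ decreaseSet F (f j) := by simp [B']
    have hB' : MeasurableSet B' := hB.union <|
      .iUnion fun j => .iUnion fun _ => measurableSet_decreaseSet F (hf_meas j)
    have h_drift := hP.ae_eventually_notMem_of_drift hB'
      (measurableSet_decreaseSet F (hf_meas i)) (hf_top i)
      (fun y hy => lintegral_add_indicator_decreaseSet_le
        (hf i y ((hB'_iff y).1 hy).1 ((hB'_iff y).1 hy).2)) x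
    have h_earlier := ae_all_iff.2 fun j => ae_all_iff.2 fun hj : j < i => ih j hj
    filter_upwards [h_drift, h_earlier] with ω hω_drift hω_earlier hω_B
    refine hω_drift ?_
    have hω_lt : ∀ᶠ n in atTop, ∀ j < i, ω n ∉ decreaseSet F (f j) :=
      eventually_all.2 fun j => eventually_all.2 fun hj => hω_earlier j hj hω_B
    filter_upwards [hω_B, hω_lt] with n hnB hn_lt
    exact (hB'_iff _).2 ⟨hnB, hn_lt⟩

end IsTraceKernel

theorem lexGE.le_of_forall_lt {n : ℕ} {a b : Fin n → ℝ≥0∞} (h : lexGE a b) {k : Fin n}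
    (hk : ∀ c < k, ¬ b c + 1 ≤ a c) : b k ≤ a k := by
  rcases h with ⟨l, h_before, h_drop⟩ | h_le
  · rcases lt_trichotomy l k with hlk | rfl | hkl
    · exact absurd h_drop (hk l hlk)
    · exact le_self_add.trans h_drop
    · exact h_before k hkl
  · exact h_le k

theorem nlexGETrunc.le_of_forall_lt {d : ℕ} {m : Fin d → ℕ} {a b : ∀ i, Fin (m i) → ℝ≥0∞}
    {n : ℕ} (h : nlexGETrunc n a b) {i : Fin d} (hi : (i : ℕ) < n) {k : Fin (m i)}
    (h_blocks : ∀ j < i, ∀ c, ¬ b j c + 1 ≤ a j c) (h_block : ∀ c < k, ¬ b i c + 1 ≤ a i c) :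
    b i k ≤ a i k := by
  rcases h with ⟨l, -, h_before, h_gt⟩ | h_ge
  · rcases lt_trichotomy l i with hli | rfl | hil
    · obtain ⟨c, -, h_drop⟩ := h_gt
      exact absurd h_drop (h_blocks l hli c)
    · exact lexGE.le_of_forall_lt (.inl h_gt) h_block
    · exact (h_before i hil).le_of_forall_lt h_block
  · exact (h_ge i hi).le_of_forall_lt h_block

namespace IsLexPMSM

variable {F : Kernel S S} {p : S → ℕ} {d : ℕ} {m : Fin d → ℕ} {r : S → ∀ i, Fin (m i) → ℝ≥0∞}

theorem measurable_component (hr : IsLexPMSM F p r) (i : Fin d) (k : Fin (m i)) :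
    Measurable fun x => r x i k :=
  hr.1 i k

theorem ne_top (hr : IsLexPMSM F p r) (x : S) (i : Fin d) (k : Fin (m i)) : r x i k ≠ ⊤ :=
  hr.2.1 x i k

theorem nlexGETrunc_nextTimeN (hr : IsLexPMSM F p r) (x : S) :
    nlexGETrunc (p x) (r x) (nextTimeN F r x) := by
  by_cases hx : Even (p x)
  · exact hr.2.2.1 x hx
  · exact .inl (hr.2.2.2 x hx)

theorem exists_mem_decreaseSet (hr : IsLexPMSM F p r) {x : S} (hx : ¬ Even (p x)) :
    ∃ i : Fin d, (i : ℕ) < p x ∧ ∃ k, x ∈ decreaseSet F fun y => r y i k := by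
  obtain ⟨i, hi, -, k, -, h_drop⟩ := hr.2.2.2 x hx
  exact ⟨i, hi, k, h_drop⟩

variable {P : Kernel S (ℕ → S)} [IsMarkovKernel P]

theorem ae_eventually_notMem_decreaseSet (hr : IsLexPMSM F p r) (hP : IsTraceKernel F P)
    (hp : Measurable p) (q : ℕ) (x : S) :
    ∀ᵐ ω ∂(P x), (∀ᶠ n in atTop, q ≤ p (ω n)) →
      ∀ᶠ n in atTop, ∀ i : Fin d, (i : ℕ) < q → ∀ k, ω n ∉ decreaseSet F fun y => r y i k := by
  let component (u : Σₗ i : {i : Fin d // (i : ℕ) < q}, Fin (m i)) (y : S) : ℝ≥0∞ := r y u.1 u.2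
  have h_nonincreasing (u) (y : S) (hy : y ∉ p ⁻¹' Iio q)
      (h_lt : ∀ v < u, y ∉ decreaseSet F (component v)) :
      ∫⁻ z, component u z ∂(F y) ≤ component u y :=
    (hr.nlexGETrunc_nextTimeN y).le_of_forall_lt (u.1.2.trans_le (not_lt.1 hy))
      (fun j hj c => h_lt ⟨⟨j, lt_trans hj u.1.2⟩, c⟩ (Sigma.Lex.left _ _ hj))
      (fun c hc => h_lt ⟨u.1, c⟩ (Sigma.Lex.right _ _ hc))
  have h_components : ∀ᵐ ω ∂(P x), ∀ u, (∀ᶠ n in atTop, ω n ∉ p ⁻¹' Iio q) →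
      ∀ᶠ n in atTop, ω n ∉ decreaseSet F (component u) :=
    ae_all_iff.2 fun u => hP.ae_eventually_notMem_decreaseSet_of_lex (f := component)
      (hp measurableSet_Iio) (fun u => hr.measurable_component u.1 u.2)
      (fun u y => hr.ne_top y u.1 u.2) h_nonincreasing u x
  filter_upwards [h_components] with ω hω hq
  have h_all : ∀ᶠ n in atTop, ∀ u, ω n ∉ decreaseSet F (component u) :=
    eventually_all.2 fun u => hω u (hq.mono fun n => not_lt.2)
  exact h_all.mono fun n hn i hi k => hn ⟨⟨i, hi⟩, k⟩

theorem ae_eventually_ne_of_not_even (hr : IsLexPMSM F p r) (hP : IsTraceKernel F P)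
    (hp : Measurable p) {q : ℕ} (hq : ¬ Even q) (x : S) :
    ∀ᵐ ω ∂(P x), (∀ᶠ n in atTop, q ≤ p (ω n)) → ∀ᶠ n in atTop, p (ω n) ≠ q := by
  filter_upwards [hr.ae_eventually_notMem_decreaseSet hP hp q x] with ω hω h_le
  filter_upwards [hω h_le] with n hn
  rintro rfl
  obtain ⟨i, hi, k, h_mem⟩ := hr.exists_mem_decreaseSet hq
  exact hn i hi k h_mem

end IsLexPMSM

theorem mem_parityEvent_of_forall_not_even {α : Type*} {p : α → ℕ} {d : ℕ} {ω : ℕ → α}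
    (h_bdd : ∀ n, p (ω n) ≤ d)
    (h_odd : ∀ q, ¬ Even q → (∀ᶠ n in atTop, q ≤ p (ω n)) → ∀ᶠ n in atTop, p (ω n) ≠ q) :
    ω ∈ parityEvent p := by
  let recurring : Set ℕ := {q | {n | p (ω n) = q}.Infinite}
  have h_recurring (q : ℕ) : q ∉ recurring ↔ ∀ᶠ n in atTop, p (ω n) ≠ q := by
    rw [← not_frequently, Nat.frequently_atTop_iff_infinite, mem_ofPred_eq]
  have h_nonempty : recurring.Nonempty := by
    by_contra h_empty
    have h_ne : ∀ᶠ n in atTop, ∀ q ∈ Iic d, p (ω n) ≠ q :=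
      (finite_Iic d).eventually_all.2 fun q _ => (h_recurring q).1 fun hq => h_empty ⟨q, hq⟩
    obtain ⟨n, hn⟩ := h_ne.exists
    exact hn _ (h_bdd n) rfl
  have h_below : ∀ᶠ n in atTop, ∀ q ∈ Iio (sInf recurring), p (ω n) ≠ q :=
    (finite_Iio _).eventually_all.2 fun q hq => (h_recurring q).1 (Nat.notMem_of_lt_sInf hq)
  have h_le : ∀ᶠ n in atTop, sInf recurring ≤ p (ω n) :=
    h_below.mono fun n hn => not_lt.1 fun h_lt => hn _ h_lt rfl
  by_contra h_not_even
  exact (h_recurring _).2 (h_odd _ h_not_even h_le) (Nat.sInf_mem h_nonempty)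

/-- If a lexicographic progress-measure supermartingale exists for `(F, p)`, then
the parity condition for `p` holds almost surely from every initial state. -/
theorem LexPMSM_implies_parity_as
    (F : Kernel S S) [IsMarkovKernel F]
    (P : Kernel S (ℕ → S)) [IsMarkovKernel P]
    (hP : ∀ s₀ : S, (P s₀ : Measure (ℕ → S)) = (F s₀).bind fun s₁ => (P s₁).map (prep s₁))
    (d : ℕ) (p : S → ℕ) (hpm : Measurable p) (hp : ∀ x, 1 ≤ p x ∧ p x ≤ d)
    (hLexPMSM : ∃ (m : Fin d → ℕ) (_ : ∀ i, 0 < m i) (r : S → ∀ i, Fin (m i) → ℝ≥0∞),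
      IsLexPMSM F p r) :
    ∀ x₀ : S, P x₀ (parityEvent p) = 1 := by
  intro x₀
  obtain ⟨m, -, r, hr⟩ := hLexPMSM
  have h_odd : ∀ᵐ ω ∂(P x₀), ∀ q, ¬ Even q →
      (∀ᶠ n in atTop, q ≤ p (ω n)) → ∀ᶠ n in atTop, p (ω n) ≠ q :=
    ae_all_iff.2 fun q => ae_all_iff.2 fun hq => hr.ae_eventually_ne_of_not_even hP hpm hq x₀
  have h_parity : ∀ᵐ ω ∂(P x₀), ω ∈ parityEvent p :=
    h_odd.mono fun ω => mem_parityEvent_of_forall_not_even fun n => (hp (ω n)).2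
  exact (measure_congr (eventuallyEq_univ.2 h_parity)).trans measure_univ
end

section
/- Let F : S → G(S) be a Markov chain on a measurable space S, let p : S → {1,…,d} be a measurable priority function, and let r : S → ∏_{i=1}^{d} [0,∞)^{m_i} be a lexicographic progress-measure supermartingale for (F, p) with components r₁,…,r_d. Define r' : S → ∏_{j=1}^{⌈d/2⌉} [0,∞)^{m'_j} by r'₁ = r₁ and r'_j = flat(r_{2j−2}, r_{2j−1}) for 2 ≤ j ≤ ⌈d/2⌉ (with m'₁ = m₁ and m'_j = m_{2j−2} + m_{2j−1}). Then r' is a reduced lexicographic progress-measure supermartingale for (F, p): for each x ∈ S, r'(x) ⪰⁽²⁾_{⌈p(x)/2⌉} (X r')(x) if p(x) is even, and r'(x) ≻⁽²⁾_{⌈p(x)/2⌉} (X r')(x) if p(x) is odd. -/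
open MeasureTheory ProbabilityTheory Set
open scoped ENNReal NNReal

variable {S : Type*} [MeasurableSpace S]

/-- Block sizes of the reduced vector: `m'₁ = m₁` and
`m'_j = m_{2j−2} + m_{2j−1}` for `2 ≤ j ≤ ⌈d/2⌉` (1-based priorities). -/
def reducedSizes (d : ℕ) (m : Fin d → ℕ) : Fin ((d + 1) / 2) → ℕ := fun j =>
  if j.val = 0 then m ⟨0, by have := j.isLt; omega⟩
  else m ⟨2 * j.val - 1, by have := j.isLt; omega⟩ + m ⟨2 * j.val, by have := j.isLt; omega⟩

/-- The reduced vector: `r'₁ = r₁` and `r'_j = flat (r_{2j−2}, r_{2j−1})` for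
`2 ≤ j ≤ ⌈d/2⌉` (1-based priorities). -/
noncomputable def reducedVec {d : ℕ} (m : Fin d → ℕ) (v : ∀ i, Fin (m i) → ℝ≥0∞) :
    ∀ j : Fin ((d + 1) / 2), Fin (reducedSizes d m j) → ℝ≥0∞ := fun j =>
  if h : j.val = 0 then
    fun k => v ⟨0, by have := j.isLt; omega⟩
      (Fin.cast (by simp [reducedSizes, h]) k)
  else
    fun k =>
      Fin.append
        (v ⟨2 * j.val - 1, by have := j.isLt; omega⟩)
        (v ⟨2 * j.val, by have := j.isLt; omega⟩)
        (Fin.cast (by simp [reducedSizes, h]) k)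

/-!
Coordinatewise integration commutes with regrouping coordinates, so the claim is about two fixed
nested vectors. Concatenating neighbouring blocks keeps both orderings: a strict drop in the left
part, or a strict drop in the right part after a weak one in the left part, is a strict drop of the
concatenation. Hence comparing the first `2n + 1` blocks yields the comparison of the first `n + 1`
reduced blocks. For an even priority `2n + 2` the last block is discarded first; this keeps `⪰⁽²⁾`
because a strict drop there still leaves weak inequalities in all the blocks before it.
-/

section LexOrder

variable {n k : ℕ} {a b : Fin n → ℝ≥0∞} {a' b' : Fin k → ℝ≥0∞}

theorem lexGT_comp_cast (h : k = n) :
    lexGT (a ∘ Fin.cast h) (b ∘ Fin.cast h) ↔ lexGT a b := by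
  subst h
  rfl

theorem lexGE_comp_cast (h : k = n) :
    lexGE (a ∘ Fin.cast h) (b ∘ Fin.cast h) ↔ lexGE a b := by
  subst h
  rfl

theorem lexGT.append_left (h : lexGT a b) (a' b' : Fin k → ℝ≥0∞) :
    lexGT (Fin.append a a') (Fin.append b b') := by
  obtain ⟨l, hle, hdrop⟩ := h
  refine ⟨Fin.castAdd k l, fun i hi => ?_, by simpa using hdrop⟩
  induction i using Fin.addCases with
  | left i => simpa using hle i hi
  | right i =>
    have hlt : Fin.castAdd k l < Fin.natAdd n i := l.isLt.trans_le (Nat.le_add_right n i)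
    exact absurd hi hlt.not_gt

theorem lexGT.append_right (h' : lexGT a' b') (h : lexGE a b) :
    lexGT (Fin.append a a') (Fin.append b b') := by
  rcases h with hlt | hle
  · exact hlt.append_left a' b'
  obtain ⟨l, hle', hdrop⟩ := h'
  refine ⟨Fin.natAdd n l, fun i hi => ?_, by simpa using hdrop⟩
  induction i using Fin.addCases with
  | left i => simpa using hle i
  | right i => simpa using hle' i (by simpa using hi)

theorem lexGE.append (h : lexGE a b) (h' : lexGE a' b') :
    lexGE (Fin.append a a') (Fin.append b b') := by
  rcases h' with hlt' | hle'
  · exact .inl (hlt'.append_right h)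
  rcases h with hlt | hle
  · exact .inl (hlt.append_left a' b')
  refine .inr fun i => ?_
  induction i using Fin.addCases with
  | left i => simpa using hle i
  | right i => simpa using hle' i

end LexOrder

section Reduction

variable {d : ℕ} {m : Fin d → ℕ} {a b : ∀ i, Fin (m i) → ℝ≥0∞}

theorem nlexGETrunc.mono {j k : ℕ} (hjk : j ≤ k) (h : nlexGETrunc k a b) :
    nlexGETrunc j a b := by
  rcases h with ⟨l, -, hge, hgt⟩ | hge
  · rcases lt_or_ge l.val j with hlj | hjl
    · exact .inl ⟨l, hlj, hge, hgt⟩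
    · exact .inr fun i hij => hge i (Fin.lt_def.2 (hij.trans_le hjl))
  · exact .inr fun i hij => hge i (hij.trans_le hjk)

theorem reducedVec_of_eq_zero (v : ∀ i, Fin (m i) → ℝ≥0∞) {j : Fin ((d + 1) / 2)}
    (hj : j.val = 0) :
    reducedVec m v j = v ⟨0, by omega⟩ ∘ Fin.cast (by simp [reducedSizes, hj]) :=
  dif_pos hj

theorem reducedVec_of_ne_zero (v : ∀ i, Fin (m i) → ℝ≥0∞) {j : Fin ((d + 1) / 2)}
    (hj : j.val ≠ 0) :
    reducedVec m v j =
      Fin.append (v ⟨2 * j.val - 1, by omega⟩) (v ⟨2 * j.val, by omega⟩) ∘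
        Fin.cast (by simp [reducedSizes, hj]) :=
  dif_neg hj

theorem lexGE_reducedVec {j : Fin ((d + 1) / 2)}
    (h : ∀ i : Fin d, i.val ≤ 2 * j.val → lexGE (a i) (b i)) :
    lexGE (reducedVec m a j) (reducedVec m b j) := by
  by_cases hj : j.val = 0
  · rw [reducedVec_of_eq_zero a hj, reducedVec_of_eq_zero b hj, lexGE_comp_cast]
    exact h _ (Nat.zero_le _)
  · rw [reducedVec_of_ne_zero a hj, reducedVec_of_ne_zero b hj, lexGE_comp_cast]
    exact (h _ (Nat.sub_le _ _)).append (h _ le_rfl)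

theorem lexGT_reducedVec {j : Fin ((d + 1) / 2)} {l : Fin d} (hj : j.val = (l.val + 1) / 2)
    (hge : ∀ i < l, lexGE (a i) (b i)) (hgt : lexGT (a l) (b l)) :
    lexGT (reducedVec m a j) (reducedVec m b j) := by
  obtain ⟨l, hl⟩ := l
  dsimp only at hj
  by_cases hj0 : j.val = 0
  · rw [reducedVec_of_eq_zero a hj0, reducedVec_of_eq_zero b hj0, lexGT_comp_cast]
    obtain rfl : l = 0 := by omega
    exact hgt
  · rw [reducedVec_of_ne_zero a hj0, reducedVec_of_ne_zero b hj0, lexGT_comp_cast]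
    obtain rfl | rfl : l = 2 * j.val ∨ l = 2 * j.val - 1 := by omega
    · exact hgt.append_right (hge _ (Fin.lt_def.2 (by dsimp only; omega)))
    · exact hgt.append_left _ _

theorem nlexGTTrunc_reducedVec {n : ℕ} (hn : 2 * n + 1 ≤ d)
    (h : nlexGTTrunc (2 * n + 1) a b) :
    nlexGTTrunc (n + 1) (reducedVec m a) (reducedVec m b) := by
  obtain ⟨l, hln, hge, hgt⟩ := h
  refine ⟨⟨(l.val + 1) / 2, by omega⟩, by dsimp only; omega, fun j hj => ?_,
    lexGT_reducedVec rfl hge hgt⟩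
  have hjl : 2 * j.val < l.val := by
    have := Fin.lt_def.1 hj
    dsimp only at this
    omega
  exact lexGE_reducedVec fun i hij => hge i (Fin.lt_def.2 (hij.trans_lt hjl))

theorem nlexGETrunc_reducedVec {n : ℕ} (hn : 2 * n + 1 ≤ d)
    (h : nlexGETrunc (2 * n + 1) a b) :
    nlexGETrunc (n + 1) (reducedVec m a) (reducedVec m b) :=
  h.imp (nlexGTTrunc_reducedVec hn) fun hge _ hjn =>
    lexGE_reducedVec fun i hij => hge i (by omega)

end Reduction

theorem nextTimeN_reducedVec (F : Kernel S S) {d : ℕ} {m : Fin d → ℕ}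
    (r : S → ∀ i, Fin (m i) → ℝ≥0∞) (x : S) :
    nextTimeN F (fun y => reducedVec m (r y)) x = reducedVec m (nextTimeN F r x) := by
  funext j k
  by_cases hj : j.val = 0
  · simp only [nextTimeN, reducedVec_of_eq_zero _ hj, Function.comp_apply]
  · simp only [nextTimeN, reducedVec_of_ne_zero _ hj, Function.comp_apply]
    induction Fin.cast _ k using Fin.addCases with
    | left i => simp only [Fin.append_left, nextTimeN]
    | right i => simp only [Fin.append_right, nextTimeN]

theorem LexPMSM_to_reduced_general (F : Kernel S S) {d : ℕ} {p : S → ℕ} (hp : ∀ x, p x ≤ d)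
    {m : Fin d → ℕ} {r : S → ∀ i, Fin (m i) → ℝ≥0∞} (hr : IsLexPMSM F p r) (x : S) :
    (Even (p x) →
      nlexGETrunc ((p x + 1) / 2) (reducedVec m (r x))
        (nextTimeN F (fun y => reducedVec m (r y)) x)) ∧
    (¬ Even (p x) →
      nlexGTTrunc ((p x + 1) / 2) (reducedVec m (r x))
        (nextTimeN F (fun y => reducedVec m (r y)) x)) := by
  obtain ⟨-, -, hge, hgt⟩ := hr
  rw [nextTimeN_reducedVec]
  refine ⟨fun heven => ?_, fun hodd => ?_⟩
  · obtain hzero | ⟨n, hn⟩ : p x = 0 ∨ ∃ n, p x = 2 * n + 2 := by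
      obtain ⟨_ | n, hn⟩ := heven
      · exact .inl hn
      · exact .inr ⟨n, by omega⟩
    · exact .inr fun i hi => by omega
    · rw [show (p x + 1) / 2 = n + 1 by omega]
      exact nlexGETrunc_reducedVec (by have := hp x; omega) ((hge x heven).mono (by omega))
  · obtain ⟨n, hn⟩ := Nat.not_even_iff_odd.1 hodd
    rw [show (p x + 1) / 2 = n + 1 by omega]
    exact nlexGTTrunc_reducedVec (hn ▸ hp x) (hn ▸ hgt x hodd)

/-- Reducing a LexPMSM: dropping the blocks of even priorities by merging each
even-priority block into the following odd-priority block yields a reduced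
LexPMSM, i.e. for every `x`, `r'(x) ⪰⁽²⁾_{⌈p(x)/2⌉} (𝕏 r')(x)` if `p(x)` is even
and `r'(x) ≻⁽²⁾_{⌈p(x)/2⌉} (𝕏 r')(x)` if `p(x)` is odd. -/
theorem LexPMSM_to_reduced
    (F : Kernel S S) [IsMarkovKernel F]
    (d : ℕ) (p : S → ℕ) (hpm : Measurable p) (hp : ∀ x, 1 ≤ p x ∧ p x ≤ d)
    (m : Fin d → ℕ) (hm : ∀ i, 0 < m i)
    (r : S → ∀ i, Fin (m i) → ℝ≥0∞) (hr : IsLexPMSM F p r) :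
    ∀ x : S,
      (Even (p x) →
        nlexGETrunc ((p x + 1) / 2) (reducedVec m (r x))
          (nextTimeN F (fun y => reducedVec m (r y)) x)) ∧
      (¬ Even (p x) →
        nlexGTTrunc ((p x + 1) / 2) (reducedVec m (r x))
          (nextTimeN F (fun y => reducedVec m (r y)) x)) :=
  LexPMSM_to_reduced_general F (fun x => (hp x).2) hr
end
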